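/- Let S and T be splayed sequences of Reeb domains with the same length k and the same type data (t_1,...,t_{k+1}). Then S and T are composable-equivalent, i.e. their total classes satisfy [S] = [T] in the group G, if and only if the associated sequences of Reeb chords rho(S) and rho(T) are 123-equivalent (have equal 123-reductions). -/

import Mathlib

/-! ## The torus algebra -/

/-- The two idempotents of the torus algebra. -/
inductive Idem : Type
  | m | l
deriving DecidableEq

/-- Reeb chords of the torus algebra. -/
inductive Chord : Type
  | r1 | r2 | r3 | r12 | r23 | r123
deriving DecidableEq

open Chord

/-- The idempotent `ι` with `ι * ρ = ρ`. -/
def iotaStart : Chord → Idem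
  | r1 => Idem.m | r2 => Idem.l | r3 => Idem.m
  | r12 => Idem.m | r23 => Idem.l | r123 => Idem.m

/-- The idempotent `ι` with `ρ * ι = ρ`. -/
def iotaEnd : Chord → Idem
  | r1 => Idem.l | r2 => Idem.m | r3 => Idem.l
  | r12 => Idem.m | r23 => Idem.l | r123 => Idem.l

/-- A chord is jumping if its starting and ending idempotents differ. -/
def Jumping (c : Chord) : Prop := iotaStart c ≠ iotaEnd c

/-- The partial product of Reeb chords (`none` encodes product zero). -/
def mul? : Chord → Chord → Option Chord
  | r1, r2 => some r12
  | r2, r3 => some r23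
  | r1, r23 => some r123
  | r12, r3 => some r123
  | _, _ => none

/-- A 123-reduction step: replace an adjacent 123-composable pair by `ρ₁₂₃`. -/
inductive Step123 : List Chord → List Chord → Prop
  | mk (pre post : List Chord) (a b : Chord) (hab : mul? a b = some r123) :
      Step123 (pre ++ a :: b :: post) (pre ++ r123 :: post)

/-- A sequence is 123-reduced if no 123-reduction step applies. -/
def Reduced123 (s : List Chord) : Prop := ∀ t, ¬ Step123 s t

/-- The lower endpoint (0-based quadrant index) of the interval of a chord. -/
def loIdx : Chord → Fin 3
  | r1 => 0 | r2 => 1 | r3 => 2 | r12 => 0 | r23 => 1 | r123 => 0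

/-- The upper endpoint (0-based quadrant index) of the interval of a chord. -/
def hiIdx : Chord → Fin 3
  | r1 => 0 | r2 => 1 | r3 => 2 | r12 => 1 | r23 => 2 | r123 => 2

/-- The non-jumping chord `π_ι` associated to an idempotent: `π_{ι_m} = ρ₁₂`,
`π_{ι_l} = ρ₂₃`. -/
def piIdem : Idem → Chord
  | Idem.m => r12
  | Idem.l => r23

/-! ## Splayed sequences of Reeb domains -/

/-- A splayed sequence of Reeb domains of length `k`: jumping chords `r 0, …, r (k-1)` with
matching idempotents, and nonnegative multiplicities `n 0, …, n k`. -/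
structure SplayedSeq (k : ℕ) where
  n : Fin (k + 1) → ℕ
  r : Fin k → Chord
  jump : ∀ i, Jumping (r i)
  coh : ∀ (i : ℕ) (h1 : i < k) (h2 : i + 1 < k), iotaEnd (r ⟨i, h1⟩) = iotaStart (r ⟨i + 1, h2⟩)

/-- The type data of a splayed sequence: `t i = iotaStart (r i)` for `i < k` and
`t k = iotaEnd (r (k-1))`. -/
def typeData {k : ℕ} (S : SplayedSeq k) (i : Fin (k + 1)) : Idem :=
  if h : (i : ℕ) < k then iotaStart (S.r ⟨i, h⟩)
  else if hk : 0 < k then iotaEnd (S.r ⟨k - 1, by omega⟩)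
  else Idem.m

/-- The sequence of Reeb chords associated to a splayed sequence of Reeb domains: for
`i = 0,…,k` in order, `n i` copies of `π_{t i}` followed (when `i < k`) by `r i`. -/
def rhoList {k : ℕ} (S : SplayedSeq k) : List Chord :=
  ((List.finRange (k + 1)).map (fun a =>
    List.replicate (S.n a) (piIdem (typeData S a)) ++
      if h : (a : ℕ) < k then [S.r ⟨a, h⟩] else [])).flatten

/-- The free abelian group on the quadrant generators `Q^i_t`, `0 ≤ i < k`, `t ∈ {1,2,3}`. -/
abbrev FreeG (k : ℕ) := (Fin k × Fin 3) →₀ ℤ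

/-- The relation vector identifying the half-disk classes of consecutive rows `a`, `a+1`,
depending on the type of the curve `δ^{a+1}` between them. -/
noncomputable def relVec (k : ℕ) (t : Fin (k + 1) → Idem) (a : ℕ) (h : a + 1 < k) : FreeG k :=
  if t ⟨a + 1, by omega⟩ = Idem.m then
    (Finsupp.single (⟨a, by omega⟩, (0 : Fin 3)) 1 + Finsupp.single (⟨a, by omega⟩, (1 : Fin 3)) 1)
      - (Finsupp.single (⟨a + 1, h⟩, (0 : Fin 3)) 1 + Finsupp.single (⟨a + 1, h⟩, (1 : Fin 3)) 1)
  else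
    (Finsupp.single (⟨a, by omega⟩, (1 : Fin 3)) 1 + Finsupp.single (⟨a, by omega⟩, (2 : Fin 3)) 1)
      - (Finsupp.single (⟨a + 1, h⟩, (1 : Fin 3)) 1 + Finsupp.single (⟨a + 1, h⟩, (2 : Fin 3)) 1)

/-- The set of defining relations of the group `G`. -/
def relSet (k : ℕ) (t : Fin (k + 1) → Idem) : Set (FreeG k) :=
  { x | ∃ (a : ℕ) (h : a + 1 < k), x = relVec k t a h }

/-- The group `G`: the abelian group generated by the quadrant classes `Q^i_t` subject to
the half-disk relations determined by the type data `t`. -/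
abbrev G (k : ℕ) (t : Fin (k + 1) → Idem) :=
  FreeG k ⧸ Submodule.span ℤ (relSet k t)

/-- The quadrant generator `Q^i_t` in `G`. -/
noncomputable def Qgen (k : ℕ) (t : Fin (k + 1) → Idem) (i : Fin k) (q : Fin 3) : G k t :=
  Submodule.Quotient.mk (Finsupp.single (i, q) 1)

/-- The class `B^i(ρ)` of a chord `ρ = ρ_{[s,e]}`: the sum of the quadrants `Q^i_s,…,Q^i_e`. -/
noncomputable def Bclass (k : ℕ) (t : Fin (k + 1) → Idem) (i : Fin k) (c : Chord) : G k t :=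
  ∑ q : Fin 3, if loIdx c ≤ q ∧ q ≤ hiIdx c then Qgen k t i q else 0

/-- The half-disk class `H^i` of the curve `δ^{i+1}` (0-based curve index `a ∈ {0,…,k}`,
using row `min a (k-1)`). -/
noncomputable def Hclass (k : ℕ) (t : Fin (k + 1) → Idem) (a : Fin (k + 1)) : G k t :=
  if hk : 0 < k then
    let b : Fin k := ⟨min (a : ℕ) (k - 1), by omega⟩
    if t a = Idem.m then Qgen k t b 0 + Qgen k t b 1 else Qgen k t b 1 + Qgen k t b 2
  else 0

/-- The total class `[S] = ∑ n_i • H^i + ∑ B^i(r_i)` of a splayed sequence of Reeb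
domains. -/
noncomputable def totalClass (k : ℕ) (t : Fin (k + 1) → Idem) (S : SplayedSeq k) : G k t :=
  (∑ a : Fin (k + 1), (S.n a) • Hclass k t a) + ∑ i : Fin k, Bclass k t i (S.r i)

/-!
Modulo the central quadrants `Q^i_2`, the group `G` is free on the half-disk classes `H^i`, and a
jumping chord at row `i` contributes `H^i` (for `ρ₁`), `H^{i+1}` (for `ρ₃`), both (for `ρ₁₂₃`) or
neither (for `ρ₂`); its central part depends only on the types. Recording the multiplicity of `H^j`
as the coefficient of `X^j` gives a weight polynomial that determines the total class and is
determined by it. The weight is unchanged by 123-reduction, and a 123-reduced sequence can be read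
off chord by chord from its weight, its initial idempotent and its number of jumps.
-/

section

open Polynomial

/-! ### Paths of chords and their weights -/

/-- The number of curves by which a chord advances: `1` for jumping chords and `0` for the others.
-/
def jumpDegree : Chord → ℕ
  | r12 | r23 => 0
  | r1 | r2 | r3 | r123 => 1

/-- The number of jumping chords in a sequence, i.e. its length as a splayed sequence. -/
def jumpCount (u : List Chord) : ℕ := (u.map jumpDegree).sum

/-- The half-disk classes contributed by a single chord, as a generating polynomial relative to the
current curve: `1` stands for the half-disk of that curve and `X` for that of the next one. Central
quadrants are discarded. -/
noncomputable def chordWeight : Chord → ℕ[X]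
  | r1 | r12 | r23 => 1
  | r2 => 0
  | r3 => X
  | r123 => 1 + X

/-- The half-disk multiplicities of a sequence of chords: the coefficient of `X ^ j` is the
multiplicity of the half-disk of the `j`-th curve after the initial one. -/
noncomputable def weight : List Chord → ℕ[X]
  | [] => 0
  | c :: u => chordWeight c + X ^ jumpDegree c * weight u

/-- `IsChordPath x u y`: the chords of `u` are consecutively composable at the level of idempotents,
leading from `x` to `y`. Their products may vanish in the torus algebra. -/
def IsChordPath : Idem → List Chord → Idem → Prop
  | x, [], y => x = y
  | x, c :: u, y => iotaStart c = x ∧ IsChordPath (iotaEnd c) u y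

theorem jumpDegree_eq_one_of_jumping {c : Chord} (hc : Jumping c) : jumpDegree c = 1 := by
  cases c <;> simp [Jumping, iotaStart, iotaEnd, jumpDegree] at hc ⊢

@[simp]
theorem jumpDegree_piIdem (x : Idem) : jumpDegree (piIdem x) = 0 := by cases x <;> rfl

@[simp]
theorem chordWeight_piIdem (x : Idem) : chordWeight (piIdem x) = 1 := by cases x <;> rfl

@[simp]
theorem iotaStart_piIdem (x : Idem) : iotaStart (piIdem x) = x := by cases x <;> rfl

@[simp]
theorem iotaEnd_piIdem (x : Idem) : iotaEnd (piIdem x) = x := by cases x <;> rfl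

@[simp]
theorem jumpCount_nil : jumpCount [] = 0 := rfl

@[simp]
theorem jumpCount_cons (c : Chord) (u : List Chord) :
    jumpCount (c :: u) = jumpDegree c + jumpCount u := by
  simp [jumpCount]

@[simp]
theorem jumpCount_append (u v : List Chord) :
    jumpCount (u ++ v) = jumpCount u + jumpCount v := by
  simp [jumpCount]

@[simp]
theorem jumpCount_replicate_piIdem (n : ℕ) (x : Idem) :
    jumpCount (List.replicate n (piIdem x)) = 0 := by
  simp [jumpCount]

theorem weight_append (u v : List Chord) :
    weight (u ++ v) = weight u + X ^ jumpCount u * weight v := by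
  induction u with
  | nil => simp [weight]
  | cons c u ih =>
    simp only [List.cons_append, weight, ih, jumpCount_cons]
    ring

theorem weight_replicate_piIdem (n : ℕ) (x : Idem) :
    weight (List.replicate n (piIdem x)) = n := by
  induction n with
  | zero => simp [weight]
  | succ n ih => simp [List.replicate_succ, weight, ih, add_comm]

theorem isChordPath_append {x z : Idem} {u v : List Chord} :
    IsChordPath x (u ++ v) z ↔ ∃ y, IsChordPath x u y ∧ IsChordPath y v z := by
  induction u generalizing x with
  | nil => simp [IsChordPath]
  | cons c u ih => simp [IsChordPath, ih, and_assoc]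

theorem isChordPath_replicate_piIdem (n : ℕ) (x : Idem) :
    IsChordPath x (List.replicate n (piIdem x)) x := by
  induction n with
  | zero => rfl
  | succ n ih => simpa [List.replicate_succ, IsChordPath] using ih

/-! ### 123-reduction -/

theorem mul?_eq_some_r123_iff {a b : Chord} :
    mul? a b = some r123 ↔ a = r1 ∧ b = r23 ∨ a = r12 ∧ b = r3 := by
  cases a <;> cases b <;> simp [mul?]

theorem Step123.length_lt {u v : List Chord} (h : Step123 u v) : v.length < u.length := by
  obtain ⟨pre, post, a, b, -⟩ := h
  simp

theorem Step123.jumpCount_eq {u v : List Chord} (h : Step123 u v) :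
    jumpCount u = jumpCount v := by
  obtain ⟨pre, post, a, b, hab⟩ := h
  rcases mul?_eq_some_r123_iff.1 hab with ⟨rfl, rfl⟩ | ⟨rfl, rfl⟩ <;> simp [jumpDegree]

theorem Step123.weight_eq {u v : List Chord} (h : Step123 u v) : weight u = weight v := by
  obtain ⟨pre, post, a, b, hab⟩ := h
  rcases mul?_eq_some_r123_iff.1 hab with ⟨rfl, rfl⟩ | ⟨rfl, rfl⟩ <;>
  · simp only [weight_append, weight, chordWeight, jumpDegree]
    ring

theorem Step123.isChordPath {u v : List Chord} (h : Step123 u v) {x y : Idem}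
    (hu : IsChordPath x u y) : IsChordPath x v y := by
  obtain ⟨pre, post, a, b, hab⟩ := h
  obtain ⟨z, hpre, hpost⟩ := isChordPath_append.1 hu
  refine isChordPath_append.2 ⟨z, hpre, ?_⟩
  rcases mul?_eq_some_r123_iff.1 hab with ⟨rfl, rfl⟩ | ⟨rfl, rfl⟩ <;>
  exact ⟨hpost.1, hpost.2.2⟩

theorem jumpCount_eq_of_reflTransGen {u v : List Chord}
    (h : Relation.ReflTransGen Step123 u v) : jumpCount u = jumpCount v := by
  induction h with
  | refl => rfl
  | tail _ hstep ih => exact ih.trans hstep.jumpCount_eq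

theorem weight_eq_of_reflTransGen {u v : List Chord}
    (h : Relation.ReflTransGen Step123 u v) : weight u = weight v := by
  induction h with
  | refl => rfl
  | tail _ hstep ih => exact ih.trans hstep.weight_eq

theorem isChordPath_of_reflTransGen {u v : List Chord} {x y : Idem}
    (h : Relation.ReflTransGen Step123 u v) (hu : IsChordPath x u y) : IsChordPath x v y := by
  induction h with
  | refl => exact hu
  | tail _ hstep ih => exact hstep.isChordPath ih

theorem exists_reduced123_reflTransGen (u : List Chord) :
    ∃ v, Reduced123 v ∧ Relation.ReflTransGen Step123 u v := by
  induction u using (measure List.length).wf.induction with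
  | _ u ih =>
    by_cases hu : Reduced123 u
    · exact ⟨u, hu, .refl⟩
    · obtain ⟨w, huw⟩ : ∃ w, Step123 u w := by simpa [Reduced123] using hu
      obtain ⟨v, hv, hwv⟩ := ih w huw.length_lt
      exact ⟨v, hv, .head huw hwv⟩

theorem Reduced123.of_cons {c : Chord} {u : List Chord} (h : Reduced123 (c :: u)) :
    Reduced123 u := by
  rintro _ ⟨pre, post, a, b, hab⟩
  exact h _ (.mk (c :: pre) post a b hab)

theorem Reduced123.mul?_ne {a b : Chord} {u : List Chord} (h : Reduced123 (a :: b :: u)) :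
    mul? a b ≠ some r123 :=
  fun hab => h _ (.mk [] u a b hab)

theorem coeff_zero_weight_of_reduced123_r1_cons {u : List Chord} {y : Idem}
    (hpath : IsChordPath Idem.l u y) (hred : Reduced123 (r1 :: u)) :
    (weight u).coeff 0 = 0 := by
  cases u with
  | nil => simp [weight]
  | cons c u =>
    have hstart := hpath.1
    have hmul := hred.mul?_ne
    cases c <;> simp_all [iotaStart, mul?, weight, chordWeight, jumpDegree]

theorem coeff_zero_weight_ne_zero_of_reduced123_r12_cons {u : List Chord} {y : Idem}
    (hpath : IsChordPath Idem.m u y) (hred : Reduced123 (r12 :: u)) (hjump : jumpCount u ≠ 0) :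
    (weight u).coeff 0 ≠ 0 := by
  cases u with
  | nil => simp at hjump
  | cons c u =>
    have hstart := hpath.1
    have hmul := hred.mul?_ne
    cases c <;> simp_all [iotaStart, mul?, weight, chordWeight, jumpDegree]

/-- The first chord of a nonempty 123-reduced path, recovered from the initial idempotent `x`, the
number `k` of jumps and the weight `w`. -/
noncomputable def leadingChord (x : Idem) (k : ℕ) (w : ℕ[X]) : Chord :=
  match x with
  | Idem.l => if w.coeff 0 = 0 then r2 else r23
  | Idem.m =>
    if w.coeff 0 = 0 then r3
    else if k = 0 ∨ w.coeff 0 ≠ 1 then r12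
    else if w.coeff 1 = 0 then r1
    else r123

theorem eq_leadingChord_of_reduced123_cons {c : Chord} {u : List Chord} {x y : Idem}
    (hpath : IsChordPath x (c :: u) y) (hred : Reduced123 (c :: u)) :
    c = leadingChord x (jumpCount (c :: u)) (weight (c :: u)) := by
  obtain ⟨rfl, htail⟩ := hpath
  cases c with
  | r1 =>
    have hzero := coeff_zero_weight_of_reduced123_r1_cons htail hred
    simp [leadingChord, iotaStart, weight, chordWeight, jumpDegree, coeff_one, hzero]
  | r12 =>
    have hpos := coeff_zero_weight_ne_zero_of_reduced123_r12_cons htail hred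
    have hk : jumpCount u = 0 ∨ (weight u).coeff 0 ≠ 0 := or_iff_not_imp_left.2 hpos
    simp [leadingChord, iotaStart, weight, chordWeight, jumpDegree, hk]
  | _ => simp [leadingChord, iotaStart, weight, chordWeight, jumpDegree, coeff_one]

theorem eq_nil_of_weight_eq_zero {u : List Chord} (hweight : weight u = 0)
    (hjump : jumpCount u = 0) : u = [] := by
  cases u with
  | nil => rfl
  | cons c u =>
    have hcoeff := congrArg (coeff · 0) hweight
    cases c <;> simp [weight, chordWeight, jumpDegree] at hcoeff hjump

theorem eq_of_reduced123_of_weight_eq {u v : List Chord} {x y z : Idem}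
    (hu : IsChordPath x u y) (hv : IsChordPath x v z) (hu_red : Reduced123 u)
    (hv_red : Reduced123 v) (hjump : jumpCount u = jumpCount v)
    (hweight : weight u = weight v) : u = v := by
  induction u generalizing v x with
  | nil => exact (eq_nil_of_weight_eq_zero hweight.symm hjump.symm).symm
  | cons c u ih =>
    cases v with
    | nil => exact eq_nil_of_weight_eq_zero hweight hjump
    | cons d v =>
      obtain rfl : c = d := by
        rw [eq_leadingChord_of_reduced123_cons hu hu_red,
          eq_leadingChord_of_reduced123_cons hv hv_red, hjump, hweight]
      have hjump_tail : jumpCount u = jumpCount v := by simpa using hjump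
      have hweight_tail : weight u = weight v := by
        ext j
        simpa [weight, coeff_X_pow_mul] using congrArg (coeff · (j + jumpDegree c)) hweight
      rw [ih hu.2 hv.2 hu_red.of_cons hv_red.of_cons hjump_tail hweight_tail]

theorem exists_common_reduction_iff_weight_eq {u v : List Chord} {x y z : Idem}
    (hu : IsChordPath x u y) (hv : IsChordPath x v z) (hjump : jumpCount u = jumpCount v) :
    (∃ w, Reduced123 w ∧ Relation.ReflTransGen Step123 u w ∧
      Relation.ReflTransGen Step123 v w) ↔ weight u = weight v := by
  constructor
  · rintro ⟨w, -, huw, hvw⟩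
    rw [weight_eq_of_reflTransGen huw, weight_eq_of_reflTransGen hvw]
  · intro hweight
    obtain ⟨u', hu'_red, huu'⟩ := exists_reduced123_reflTransGen u
    obtain ⟨v', hv'_red, hvv'⟩ := exists_reduced123_reflTransGen v
    obtain rfl : u' = v' :=
      eq_of_reduced123_of_weight_eq (isChordPath_of_reflTransGen huu' hu)
        (isChordPath_of_reflTransGen hvv' hv) hu'_red hv'_red
        (by rw [← jumpCount_eq_of_reflTransGen huu', hjump, jumpCount_eq_of_reflTransGen hvv'])
        (by rw [← weight_eq_of_reflTransGen huu', hweight, weight_eq_of_reflTransGen hvv'])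
    exact ⟨u', hu'_red, huu', hvv'⟩

/-! ### The chord sequence of a splayed sequence -/

section Blocks

variable {k : ℕ} {block : Fin k → List Chord}

theorem jumpCount_flatten_ofFn (hblock : ∀ i, jumpCount (block i) = 1) :
    jumpCount (List.ofFn block).flatten = k := by
  induction k with
  | zero => simp
  | succ k ih => simp [List.ofFn_succ, hblock, ih, add_comm]

theorem weight_flatten_ofFn (hblock : ∀ i, jumpCount (block i) = 1) :
    weight (List.ofFn block).flatten = ∑ i : Fin k, X ^ (i : ℕ) * weight (block i) := by
  induction k with
  | zero => simp [weight]
  | succ k ih =>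
    simp [List.ofFn_succ, weight_append, hblock, ih, Fin.sum_univ_succ, Finset.mul_sum, pow_succ',
      mul_assoc]

theorem isChordPath_flatten_ofFn {t : Fin (k + 1) → Idem}
    (hblock : ∀ i, IsChordPath (t i.castSucc) (block i) (t i.succ)) :
    IsChordPath (t 0) (List.ofFn block).flatten (t (Fin.last k)) := by
  induction k with
  | zero => rfl
  | succ k ih =>
    rw [List.ofFn_succ, List.flatten_cons]
    exact isChordPath_append.2 ⟨_, hblock 0, ih (t := fun i => t i.succ) fun i => hblock i.succ⟩

end Blocks

namespace SplayedSeq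

variable {k : ℕ} (S : SplayedSeq k)

theorem typeData_castSucc (i : Fin k) : typeData S i.castSucc = iotaStart (S.r i) := by
  simp [typeData]

theorem typeData_succ (i : Fin k) : typeData S i.succ = iotaEnd (S.r i) := by
  by_cases h : (i : ℕ) + 1 < k
  · simpa [typeData, h] using (S.coh i i.2 h).symm
  · have hlast : k - 1 = i := by omega
    simp [typeData, h, hlast, i.pos]

theorem typeData_castSucc_ne_succ (i : Fin k) : typeData S i.castSucc ≠ typeData S i.succ := by
  rw [typeData_castSucc, typeData_succ]
  exact S.jump i

/-- The part of `rhoList S` belonging to the `i`-th curve, up to and including the jumping chord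
that leaves it. -/
def block (i : Fin k) : List Chord :=
  List.replicate (S.n i.castSucc) (piIdem (typeData S i.castSucc)) ++ [S.r i]

theorem rhoList_eq_flatten_block_append :
    rhoList S = (List.ofFn S.block).flatten ++
      List.replicate (S.n (Fin.last k)) (piIdem (typeData S (Fin.last k))) := by
  have hblock : S.block = fun i =>
      List.replicate (S.n i.castSucc) (piIdem (typeData S i.castSucc)) ++ [S.r i] := rfl
  simp [rhoList, List.finRange_succ_last, List.ofFn_eq_map, Function.comp_def, hblock]

theorem jumpCount_block (i : Fin k) : jumpCount (S.block i) = 1 := by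
  simp [block, jumpDegree_eq_one_of_jumping (S.jump i)]

theorem weight_block (i : Fin k) :
    weight (S.block i) = S.n i.castSucc + chordWeight (S.r i) := by
  simp [block, weight_append, weight_replicate_piIdem, weight]

theorem isChordPath_block (i : Fin k) :
    IsChordPath (typeData S i.castSucc) (S.block i) (typeData S i.succ) :=
  isChordPath_append.2 ⟨_, isChordPath_replicate_piIdem _ _,
    (typeData_castSucc S i).symm, (typeData_succ S i).symm⟩

theorem jumpCount_rhoList : jumpCount (rhoList S) = k := by
  simp [rhoList_eq_flatten_block_append, jumpCount_flatten_ofFn S.jumpCount_block]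

theorem weight_rhoList :
    weight (rhoList S) =
      ∑ a : Fin (k + 1), S.n a • X ^ (a : ℕ) + ∑ i : Fin k, X ^ (i : ℕ) * chordWeight (S.r i) := by
  rw [rhoList_eq_flatten_block_append, weight_append, weight_flatten_ofFn S.jumpCount_block,
    jumpCount_flatten_ofFn S.jumpCount_block, weight_replicate_piIdem, Fin.sum_univ_castSucc]
  simp only [weight_block, mul_add, Finset.sum_add_distrib, nsmul_eq_mul, Fin.val_castSucc,
    Fin.val_last, mul_comm (X ^ _) (Nat.cast _)]
  ring

theorem isChordPath_rhoList :
    IsChordPath (typeData S 0) (rhoList S) (typeData S (Fin.last k)) := by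
  rw [rhoList_eq_flatten_block_append]
  exact isChordPath_append.2
    ⟨_, isChordPath_flatten_ofFn S.isChordPath_block, isChordPath_replicate_piIdem _ _⟩

end SplayedSeq

/-! ### Half-disk coordinates on `G` -/

section HalfDisks

variable {k : ℕ} (t : Fin (k + 1) → Idem)

theorem Bclass_piIdem_eq_of_consecutive_rows (a : ℕ) (h : a + 1 < k) :
    Bclass k t ⟨a, by omega⟩ (piIdem (t ⟨a + 1, by omega⟩)) =
      Bclass k t ⟨a + 1, h⟩ (piIdem (t ⟨a + 1, by omega⟩)) := by
  have hrel : (Submodule.Quotient.mk (relVec k t a h) : G k t) = 0 :=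
    (Submodule.Quotient.mk_eq_zero _).2 (Submodule.subset_span ⟨a, h, rfl⟩)
  rw [← sub_eq_zero, ← hrel]
  cases htype : t ⟨a + 1, by omega⟩ <;>
    simp [Bclass, Fin.sum_univ_three, piIdem, loIdx, hiIdx, relVec, htype, Qgen]

theorem Hclass_castSucc (i : Fin k) :
    Hclass k t i.castSucc = Bclass k t i (piIdem (t i.castSucc)) := by
  have hrow : min (i : ℕ) (k - 1) = i := by omega
  cases htype : t i.castSucc <;>
    simp [Hclass, Bclass, Fin.sum_univ_three, piIdem, loIdx, hiIdx, htype, hrow, i.pos]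

theorem Hclass_succ (i : Fin k) : Hclass k t i.succ = Bclass k t i (piIdem (t i.succ)) := by
  by_cases h : (i : ℕ) + 1 < k
  · exact (Hclass_castSucc t ⟨i + 1, h⟩).trans (Bclass_piIdem_eq_of_consecutive_rows t i h).symm
  · have hrow : min ((i : ℕ) + 1) (k - 1) = i := by omega
    cases htype : t i.succ <;>
      simp [Hclass, Bclass, Fin.sum_univ_three, piIdem, loIdx, hiIdx, htype, hrow, i.pos]

/-- The combination of half-disk classes with the coefficients of a polynomial, `X ^ j` standing for
`H^j`. Exponents above `k` are reduced modulo `k + 1`; they do not occur in weights. -/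
noncomputable def halfDiskSum : ℕ[X] →ₗ[ℕ] G k t :=
  lsum fun j => LinearMap.toSpanSingleton ℕ (G k t) (Hclass k t (Fin.ofNat (k + 1) j))

theorem halfDiskSum_X_pow (a : Fin (k + 1)) : halfDiskSum t (X ^ (a : ℕ)) = Hclass k t a := by
  simp [halfDiskSum, lsum_apply, ← monomial_one_right_eq_X_pow, sum_monomial_index]

/-- The multiplicity of the central quadrant in the class of a jumping chord starting at the given
idempotent, once half-disk classes are split off. -/
def centralMultiplicity : Idem → ℤ
  | Idem.m => -1
  | Idem.l => 1

theorem Bclass_eq_halfDiskSum_add {i : Fin k} {c : Chord} (hc : Jumping c)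
    (hstart : t i.castSucc = iotaStart c) (hend : t i.succ = iotaEnd c) :
    Bclass k t i c = halfDiskSum t (X ^ (i : ℕ) * chordWeight c) +
      centralMultiplicity (t i.castSucc) • Qgen k t i 1 := by
  have hleft := halfDiskSum_X_pow t i.castSucc
  have hright := halfDiskSum_X_pow t i.succ
  rw [Hclass_castSucc, hstart, Fin.val_castSucc] at hleft
  rw [Hclass_succ, hend, Fin.val_succ] at hright
  cases c with
  | r12 | r23 => exact absurd rfl hc
  | _ =>
    simp [hleft, hright, hstart, iotaStart, iotaEnd, piIdem, Bclass, Fin.sum_univ_three, loIdx,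
      hiIdx, chordWeight, centralMultiplicity, mul_add, ← pow_succ] <;> abel

theorem totalClass_eq_halfDiskSum_weight_add {t : Fin (k + 1) → Idem} {S : SplayedSeq k}
    (hS : typeData S = t) :
    totalClass k t S = halfDiskSum t (weight (rhoList S)) +
      ∑ i : Fin k, centralMultiplicity (t i.castSucc) • Qgen k t i 1 := by
  subst hS
  simp only [totalClass, S.weight_rhoList, map_add, map_sum, map_nsmul, halfDiskSum_X_pow,
    add_assoc, ← Finset.sum_add_distrib]
  congr 1
  exact Finset.sum_congr rfl fun i _ => Bclass_eq_halfDiskSum_add _ (S.jump i)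
    (S.typeData_castSucc i) (S.typeData_succ i)

/-- The index of the curve of type `x` among the two curves `i` and `i + 1` bounding row `i`, which
are assumed to have different types. -/
def curveIndex (i : Fin k) (x : Idem) : ℕ := if t i.castSucc = x then i else i + 1

/-- The half-disk coordinates of the quadrant `q` in row `i`: the outer quadrants are the two
half-disks minus the central quadrant, which is sent to zero. -/
noncomputable def quadrantCoords (i : Fin k) : Fin 3 → ℤ[X] :=
  ![X ^ curveIndex t i Idem.m, 0, X ^ curveIndex t i Idem.l]

variable {t}

theorem curveIndex_castSucc (i : Fin k) : curveIndex t i (t i.castSucc) = i := by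
  simp [curveIndex]

theorem curveIndex_succ {i : Fin k} (hi : t i.castSucc ≠ t i.succ) :
    curveIndex t i (t i.succ) = i + 1 := by
  simp [curveIndex, hi]

theorem span_relSet_le_ker_quadrantCoords (ht : ∀ i : Fin k, t i.castSucc ≠ t i.succ) :
    Submodule.span ℤ (relSet k t) ≤ LinearMap.ker
      (Finsupp.linearCombination ℤ fun p : Fin k × Fin 3 => quadrantCoords t p.1 p.2) := by
  rw [Submodule.span_le]
  rintro _ ⟨a, h, rfl⟩
  have hleft : curveIndex t ⟨a, by omega⟩ (t ⟨a + 1, by omega⟩) = a + 1 :=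
    curveIndex_succ (ht ⟨a, by omega⟩)
  have hright : curveIndex t ⟨a + 1, h⟩ (t ⟨a + 1, by omega⟩) = a + 1 :=
    curveIndex_castSucc ⟨a + 1, h⟩
  cases htype : t ⟨a + 1, by omega⟩ <;> rw [htype] at hleft hright <;>
    simp [relVec, htype, quadrantCoords, hleft, hright]

variable (ht : ∀ i : Fin k, t i.castSucc ≠ t i.succ)

/-- The linear map reading off half-disk multiplicities of a class in `G`, with `H^j` sent to
`X ^ j` and all central quadrants sent to zero. -/
noncomputable def halfDiskCoords : G k t →ₗ[ℤ] ℤ[X] :=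
  Submodule.liftQ _ _ (span_relSet_le_ker_quadrantCoords ht)

theorem halfDiskCoords_Qgen (i : Fin k) (q : Fin 3) :
    halfDiskCoords ht (Qgen k t i q) = quadrantCoords t i q := by
  simp [halfDiskCoords, Qgen]

theorem halfDiskCoords_Bclass_piIdem (i : Fin k) (x : Idem) :
    halfDiskCoords ht (Bclass k t i (piIdem x)) = X ^ curveIndex t i x := by
  cases x <;>
    simp [Bclass, Fin.sum_univ_three, piIdem, loIdx, hiIdx, halfDiskCoords_Qgen, quadrantCoords]

theorem halfDiskCoords_Hclass (hk : 0 < k) (a : Fin (k + 1)) :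
    halfDiskCoords ht (Hclass k t a) = X ^ (a : ℕ) := by
  obtain ⟨k, rfl⟩ := Nat.exists_eq_add_one.2 hk
  cases a using Fin.lastCases with
  | cast i => rw [Hclass_castSucc, halfDiskCoords_Bclass_piIdem, curveIndex_castSucc,
      Fin.val_castSucc]
  | last => rw [← Fin.succ_last, Hclass_succ, halfDiskCoords_Bclass_piIdem, curveIndex_succ (ht _),
      Fin.val_succ]

theorem halfDiskCoords_Bclass {i : Fin k} {c : Chord}
    (hstart : t i.castSucc = iotaStart c) :
    halfDiskCoords ht (Bclass k t i c) =
      (X ^ (i : ℕ) * chordWeight c).map (Nat.castRingHom ℤ) := by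
  cases c <;>
    simp [Bclass, Fin.sum_univ_three, loIdx, hiIdx, halfDiskCoords_Qgen, quadrantCoords,
      curveIndex, hstart, iotaStart, chordWeight, mul_add, pow_succ]

theorem halfDiskCoords_totalClass (hk : 0 < k) {S : SplayedSeq k} (hS : typeData S = t) :
    halfDiskCoords ht (totalClass k t S) =
      (weight (rhoList S)).map (Nat.castRingHom ℤ) := by
  have hB (i : Fin k) := halfDiskCoords_Bclass ht (hS ▸ S.typeData_castSucc i)
  simp only [totalClass, S.weight_rhoList, map_add, map_sum, map_nsmul, halfDiskCoords_Hclass ht hk,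
    hB, Polynomial.map_add, Polynomial.map_sum, nsmul_eq_mul, Polynomial.map_mul,
    Polynomial.map_natCast, Polynomial.map_pow, map_X]

theorem totalClass_eq_iff_weight_eq (hk : 0 < k) {S T : SplayedSeq k} (hS : typeData S = t)
    (hT : typeData T = t) :
    totalClass k t S = totalClass k t T ↔ weight (rhoList S) = weight (rhoList T) := by
  have ht : ∀ i : Fin k, t i.castSucc ≠ t i.succ := hS ▸ S.typeData_castSucc_ne_succ
  constructor
  · intro h
    apply map_injective (Nat.castRingHom ℤ) Nat.cast_injective
    rw [← halfDiskCoords_totalClass ht hk hS, h, halfDiskCoords_totalClass ht hk hT]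
  · intro h
    rw [totalClass_eq_halfDiskSum_weight_add hS, h, ← totalClass_eq_halfDiskSum_weight_add hT]

end HalfDisks

end

/-- Two splayed sequences of Reeb domains with the same length and the same type data are
composable-equivalent (their total classes agree in `G`) if and only if their associated
sequences of Reeb chords are 123-equivalent, i.e. have equal 123-reductions (equivalently,
they can be 123-reduced to a common 123-reduced sequence). -/
theorem composableEquivalent_iff_rho_123equivalent
    (k : ℕ) (hk : 0 < k) (t : Fin (k + 1) → Idem)
    (S T : SplayedSeq k) (hS : typeData S = t) (hT : typeData T = t) :
    totalClass k t S = totalClass k t T ↔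
      ∃ u : List Chord, Reduced123 u ∧
        Relation.ReflTransGen Step123 (rhoList S) u ∧
        Relation.ReflTransGen Step123 (rhoList T) u := by
  subst hS
  have hjump : jumpCount (rhoList S) = jumpCount (rhoList T) := by
    rw [S.jumpCount_rhoList, T.jumpCount_rhoList]
  have hpathT : IsChordPath (typeData S 0) (rhoList T) (typeData S (Fin.last k)) :=
    hT ▸ T.isChordPath_rhoList
  rw [totalClass_eq_iff_weight_eq hk rfl hT,
    exists_common_reduction_iff_weight_eq S.isChordPath_rhoList hpathT hjump]
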